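/- Fix positive integers c and n, positive integers x₁,…,xₙ with d = x₁+⋯+xₙ satisfying the genericity condition Σ_{i∈I} xᵢ ≠ Σ_{j∈J} xⱼ for all pairs of distinct subsets I, J ⊆ {1,…,n}, and equip the rectangle Δ of width c and height d with boundary data μ₁ = (c), μ₂ = (1,…,1) (c parts equal to 1), ν₁ = (x₁,…,xₙ), ν₂ = (d). Then for every admissible pair (A,B), the positive multiplicity of the corresponding lattice path satisfies mult₊(γ(A,B)) = x₁·x₂·⋯·xₙ. -/

import Mathlib

open Classical

noncomputable section

namespace TropPaths

/-- Lattice points of the plane. -/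
abbrev Pt := ℤ × ℤ

/-- The order on `ℤ²` induced by `λ(x,y) = x - εy` for a small irrational `ε > 0`:
`p ≺ q` iff `p₁ < q₁`, or (`p₁ = q₁` and `p₂ > q₂`). -/
def lamLT (p q : Pt) : Prop := p.1 < q.1 ∨ (p.1 = q.1 ∧ q.2 < p.2)

/-- A lattice path, recorded as the list of its points, is `λ`-increasing. -/
def Increasing (γ : List Pt) : Prop := List.Chain' lamLT γ

/-- The determinant of two vectors in `ℤ²`. -/
def det (u v : Pt) : ℤ := u.1 * v.2 - u.2 * v.1

/-- The `k`-th point of a path (junk value out of range). -/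
def pt (γ : List Pt) (k : ℕ) : Pt := γ.getD k (0, 0)

/-- The `k`-th step vector of a path. -/
def stepAt (γ : List Pt) (k : ℕ) : Pt := pt γ (k + 1) - pt γ k

/-- The list of all step vectors of a path. -/
def steps (γ : List Pt) : List Pt := List.zipWith (fun a b => b - a) γ γ.tail

/-- The multiset of down steps `(0,-s)`, `s > 0`, of a path. -/
def downSteps (γ : List Pt) : Multiset Pt :=
  Multiset.filter (fun v => v.1 = 0 ∧ v.2 < 0) (steps γ : Multiset Pt)

/-- The multiset of up-right steps of a path. -/
def upRightSteps (γ : List Pt) : Multiset Pt :=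
  Multiset.filter (fun v => 0 < v.1 ∧ 0 < v.2) (steps γ : Multiset Pt)

/-- The path makes a turn of sign `s` at the (interior) index `k`; for left turns
`s = (0 < ·)`, for right turns `s = (· < 0)`. -/
def TurnAt (s : ℤ → Prop) (γ : List Pt) (k : ℕ) : Prop :=
  0 < k ∧ k + 1 < γ.length ∧ s (det (pt γ k - pt γ (k - 1)) (pt γ (k + 1) - pt γ k))

/-- `k` is the first turn of sign `s` of the path. -/
def FirstTurn (s : ℤ → Prop) (γ : List Pt) (k : ℕ) : Prop :=
  TurnAt s γ k ∧ ∀ j, TurnAt s γ j → k ≤ j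

/-- Twice the area of the triangle with vertices `γ(k-1), γ(k), γ(k+1)`. -/
def triArea2 (γ : List Pt) (k : ℕ) : ℕ :=
  (det (pt γ k - pt γ (k - 1)) (pt γ (k + 1) - pt γ k)).natAbs

/-- The path obtained by cutting the corner at index `k`, i.e. deleting the point `γ(k)`. -/
def cut (γ : List Pt) (k : ℕ) : List Pt := γ.eraseIdx k

/-- The path obtained by completing the parallelogram at index `k`, i.e. replacing
`γ(k)` by `γ(k-1) + γ(k+1) - γ(k)`. -/
def push (γ : List Pt) (k : ℕ) : List Pt :=
  γ.set k (pt γ (k - 1) + pt γ (k + 1) - pt γ k)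

/-- All points of the path lie in `Δ`. -/
def Inside (Δ : Set Pt) (γ : List Pt) : Prop := ∀ z ∈ γ, z ∈ Δ

/-- Mikhalkin's multiplicity recursion, as a functional relation: `MultRel Δ Init s γ m`
means that the recursion (performed always at the *first* turn of sign `s`) assigns the
multiplicity `m` to the path `γ`.  Here `Δ` is the set of lattice points of the polygon,
`Init` the set of initial paths (of multiplicity `1`), and `s` the turn sign
(`0 < ·` for left turns / `mult₊`, `· < 0` for right turns / `mult₋`). -/
inductive MultRel (Δ : Set Pt) (Init : List Pt → Prop) (s : ℤ → Prop) : List Pt → ℕ → Prop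
  | init {γ : List Pt} : Init γ → MultRel Δ Init s γ 1
  | noTurn {γ : List Pt} : ¬Init γ → (∀ k, ¬TurnAt s γ k) → MultRel Δ Init s γ 0
  | stepIn {γ : List Pt} {k m' m'' : ℕ} : ¬Init γ → FirstTurn s γ k →
      Inside Δ (push γ k) → MultRel Δ Init s (cut γ k) m' →
      MultRel Δ Init s (push γ k) m'' →
      MultRel Δ Init s γ (triArea2 γ k * m' + m'')
  | stepOut {γ : List Pt} {k m' : ℕ} : ¬Init γ → FirstTurn s γ k →
      ¬Inside Δ (push γ k) → MultRel Δ Init s (cut γ k) m' →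
      MultRel Δ Init s γ (triArea2 γ k * m')

/-- The multiplicity function determined by Mikhalkin's recursion. -/
def multOf (Δ : Set Pt) (Init : List Pt → Prop) (s : ℤ → Prop) (γ : List Pt) : ℕ :=
  if h : ∃ m, MultRel Δ Init s γ m then h.choose else 0

/-- `γ ≺ δ`: the path `δ` is obtained from `γ` by finitely many steps of the multiplicity
recursion (each step cuts the corner at the first turn of sign `s`, or completes the
parallelogram there). -/
inductive Reaches (Δ : Set Pt) (Init : List Pt → Prop) (s : ℤ → Prop) : List Pt → List Pt → Prop
  | refl (γ : List Pt) : Reaches Δ Init s γ γ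
  | cutStep {γ δ : List Pt} {k : ℕ} : ¬Init γ → FirstTurn s γ k →
      Reaches Δ Init s (cut γ k) δ → Reaches Δ Init s γ δ
  | pushStep {γ δ : List Pt} {k : ℕ} : ¬Init γ → FirstTurn s γ k →
      Inside Δ (push γ k) → Reaches Δ Init s (push γ k) δ → Reaches Δ Init s γ δ

/-- The lattice path starting at `p` with the given list of step vectors. -/
def pathFrom : Pt → List Pt → List Pt
  | p, [] => [p]
  | p, v :: vs => p :: pathFrom (p + v) vs

/-- Horizontal (rightward) steps of the given sizes. -/
def hSteps (l : List ℕ) : List Pt := l.map fun k => ((k : ℤ), 0)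

/-- Vertical downward steps of the given sizes. -/
def dSteps (l : List ℕ) : List Pt := l.map fun k => ((0 : ℤ), -(k : ℤ))

/-- A multiset of positive integers is a partition of `t`. -/
def IsPartition (m : Multiset ℕ) (t : ℕ) : Prop := (∀ k ∈ m, 0 < k) ∧ m.sum = t

/-! ## The rectangle `[0,c] × [0,d]` -/

/-- The lattice points of the rectangle with vertices `(0,0), (c,0), (0,d), (c,d)`. -/
def rect (c d : ℕ) : Set Pt := {z | 0 ≤ z.1 ∧ z.1 ≤ (c : ℤ) ∧ 0 ≤ z.2 ∧ z.2 ≤ (d : ℤ)}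

/-- `β₊`-initial paths of the rectangle: from `p = (0,d)` clockwise along the top edge with
step sizes the parts of `μ₂` and then down the right edge with step sizes the parts of `ν₂`. -/
def InitPlusRect (d : ℕ) (μ₂ ν₂ : Multiset ℕ) (γ : List Pt) : Prop :=
  ∃ s t : List ℕ, (s : Multiset ℕ) = μ₂ ∧ (t : Multiset ℕ) = ν₂ ∧
    γ = pathFrom (0, (d : ℤ)) (hSteps s ++ dSteps t)

/-- `β₋`-initial paths of the rectangle: from `p = (0,d)` counterclockwise down the left edge
with step sizes the parts of `ν₁` and then along the bottom edge with step sizes the parts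
of `μ₁`. -/
def InitMinusRect (d : ℕ) (μ₁ ν₁ : Multiset ℕ) (γ : List Pt) : Prop :=
  ∃ s t : List ℕ, (s : Multiset ℕ) = ν₁ ∧ (t : Multiset ℕ) = μ₁ ∧
    γ = pathFrom (0, (d : ℤ)) (dSteps s ++ hSteps t)

/-- `mult₊` for the rectangle with boundary data `(μ₁, μ₂, ν₁, ν₂)`. -/
def multPlusRect (c d : ℕ) (μ₂ ν₂ : Multiset ℕ) : List Pt → ℕ :=
  multOf (rect c d) (InitPlusRect d μ₂ ν₂) (fun x => 0 < x)

/-- `mult₋` for the rectangle with boundary data `(μ₁, μ₂, ν₁, ν₂)`. -/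
def multMinusRect (c d : ℕ) (μ₁ ν₁ : Multiset ℕ) : List Pt → ℕ :=
  multOf (rect c d) (InitMinusRect d μ₁ ν₁) (fun x => x < 0)

/-- `mult = mult₊ · mult₋` for the rectangle with boundary data `(μ₁, μ₂, ν₁, ν₂)`. -/
def multRect (c d : ℕ) (μ₁ μ₂ ν₁ ν₂ : Multiset ℕ) (γ : List Pt) : ℕ :=
  multPlusRect c d μ₂ ν₂ γ * multMinusRect c d μ₁ ν₁ γ

/-- A `λ`-increasing lattice path from `(0,d)` to `(c,0)` contained in the rectangle. -/
def IsPathRect (c d : ℕ) (γ : List Pt) : Prop :=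
  Increasing γ ∧ γ.head? = some (0, (d : ℤ)) ∧ γ.getLast? = some ((c : ℤ), 0) ∧
    Inside (rect c d) γ

/-- The genericity condition: all subset sums of the `xᵢ` are distinct. -/
def Generic {n : ℕ} (x : Fin n → ℕ) : Prop :=
  ∀ I J : Finset (Fin n), I ≠ J → ∑ i ∈ I, x i ≠ ∑ j ∈ J, x j

/-! ## Admissible pairs and the paths `γ(A,B)` -/

/-- An admissible pair `(A,B)`: pairwise disjoint sequences `A₀,…,A_{c-1}` in `{1,…,n}`
whose entries together partition `{1,…,n}`, and pairwise disjoint subsets `B₀,…,B_{c-1}`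
with union `{1,…,n}`, such that `B₀ ≠ ∅` and
`B_k ⊆ (A₀ ∪ ⋯ ∪ A_k) \ (B₀ ∪ ⋯ ∪ B_{k-1})` for all `k`. -/
def IsAdmissible {c n : ℕ} (A : Fin c → List (Fin n)) (B : Fin c → Finset (Fin n)) : Prop :=
  ((List.ofFn A).flatten : Multiset (Fin n)) = (Finset.univ : Finset (Fin n)).val ∧
  (∀ i : Fin n, ∃! k : Fin c, i ∈ B k) ∧
  (∀ k : Fin c, (k : ℕ) = 0 → (B k).Nonempty) ∧
  ∀ k : Fin c, B k ⊆
    (Finset.univ.filter fun i => ∃ j : Fin c, j ≤ k ∧ i ∈ A j) \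
      (Finset.univ.filter fun i => ∃ j : Fin c, j < k ∧ i ∈ B j)

/-- The steps of `γ(A,B)` in the column `x = k`: down steps of sizes `xᵢ`, `i ∈ A_k`, in
order, followed by the step `(1, Σ_{i ∈ B_k} xᵢ)` to the next column. -/
def colSteps {c n : ℕ} (x : Fin n → ℕ) (A : Fin c → List (Fin n))
    (B : Fin c → Finset (Fin n)) (k : Fin c) : List Pt :=
  ((A k).map fun i => ((0 : ℤ), -(x i : ℤ))) ++ [((1 : ℤ), ∑ i ∈ B k, (x i : ℤ))]

/-- The lattice path `γ(A,B)` associated to an admissible pair, from `(0,d)` to `(c,0)`,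
whose last step is the full right edge. -/
def gammaAB {c n : ℕ} (x : Fin n → ℕ) (A : Fin c → List (Fin n))
    (B : Fin c → Finset (Fin n)) : List Pt :=
  pathFrom (0, ((∑ i, x i : ℕ) : ℤ))
    ((List.ofFn (colSteps x A B)).flatten ++ [((0 : ℤ), -((∑ i, x i : ℕ) : ℤ))])

/-! ## The trapezoid of Lemma 4.? -/

/-- The lattice points of the trapezoid with vertices `(0,0), (0,a), (1,a), (1,b)`. -/
def trap (a b : ℕ) : Set Pt :=
  {z | 0 ≤ z.1 ∧ z.1 ≤ 1 ∧ (b : ℤ) * z.1 ≤ z.2 ∧ z.2 ≤ (a : ℤ)}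

/-- `β₊`-initial paths of the trapezoid: one step of lattice length 1 along the top edge,
then down the right edge with step sizes the parts of `βright`. -/
def InitPlusTrap (a : ℕ) (βright : Multiset ℕ) (γ : List Pt) : Prop :=
  ∃ t : List ℕ, (t : Multiset ℕ) = βright ∧
    γ = pathFrom (0, (a : ℤ)) (((1 : ℤ), (0 : ℤ)) :: dSteps t)

/-! ## Automorphisms of a partition -/

/-- `|Aut ν| = ∏_k m_k(ν)!` where `m_k(ν)` is the number of parts of `ν` equal to `k`. -/
def autCard (m : Multiset ℕ) : ℕ :=
  (m.dedup.map fun k => (m.count k).factorial).prod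

/-! ## Paths in terms of their steps -/

theorem length_pathFrom (p : Pt) (w : List Pt) : (pathFrom p w).length = w.length + 1 := by
  induction w generalizing p with
  | nil => rfl
  | cons a w ih => simp [pathFrom, ih]

theorem pt_pathFrom (p : Pt) (w : List Pt) (k : ℕ) (hk : k ≤ w.length) :
    pt (pathFrom p w) k = p + (w.take k).sum := by
  induction w generalizing p k with
  | nil =>
    have : k = 0 := by simpa using hk
    subst this
    simp [pathFrom, pt]
  | cons a w ih =>
    cases k with
    | zero => simp [pathFrom, pt]
    | succ k =>
      have := ih (p + a) k (by simpa using hk)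
      simp only [pt, pathFrom, List.getD_cons_succ, List.take_succ_cons, List.sum_cons] at this ⊢
      rw [this, add_assoc]

theorem pt_mid (p : Pt) (u v : List Pt) : pt (pathFrom p (u ++ v)) u.length = p + u.sum := by
  rw [pt_pathFrom _ _ _ (by simp)]
  simp

theorem pt_mid1 (p : Pt) (u : List Pt) (a : Pt) (v : List Pt) :
    pt (pathFrom p (u ++ a :: v)) (u.length + 1) = p + u.sum + a := by
  have := pt_mid p (u ++ [a]) v
  simp only [List.append_assoc, List.singleton_append, List.length_append, List.length_singleton,
    List.sum_append, List.sum_singleton] at this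
  rw [this, add_assoc]

theorem pt_mid2 (p : Pt) (u : List Pt) (a b : Pt) (v : List Pt) :
    pt (pathFrom p (u ++ a :: b :: v)) (u.length + 1 + 1) = p + u.sum + a + b := by
  have := pt_mid1 p (u ++ [a]) b v
  simp only [List.append_assoc, List.singleton_append, List.length_append, List.length_singleton,
    List.sum_append, List.sum_singleton] at this
  rw [this, ← add_assoc]

theorem det_mid (p : Pt) (u : List Pt) (a b : Pt) (v : List Pt) :
    det (pt (pathFrom p (u ++ a :: b :: v)) (u.length + 1)
        - pt (pathFrom p (u ++ a :: b :: v)) (u.length + 1 - 1))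
      (pt (pathFrom p (u ++ a :: b :: v)) (u.length + 1 + 1)
        - pt (pathFrom p (u ++ a :: b :: v)) (u.length + 1)) = det a b := by
  rw [pt_mid2, pt_mid1, Nat.add_sub_cancel, pt_mid]
  congr 1 <;> abel

theorem turnAt_iff (s : ℤ → Prop) (p : Pt) (w : List Pt) (k : ℕ) :
    TurnAt s (pathFrom p w) k ↔
      ∃ u a b v, w = u ++ a :: b :: v ∧ k = u.length + 1 ∧ s (det a b) := by
  constructor
  · rintro ⟨h0, h1, h2⟩
    rw [length_pathFrom] at h1
    obtain ⟨j, rfl⟩ : ∃ j, k = j + 1 := ⟨k - 1, by omega⟩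
    have e : w = w.take j ++ w[j] :: w[j + 1] :: w.drop (j + 2) := by
      conv_lhs => rw [← List.take_append_drop j w]
      rw [List.drop_eq_getElem_cons (by omega), List.drop_eq_getElem_cons (by omega)]
    have hl : j = (w.take j).length := by simp; omega
    refine ⟨w.take j, w[j], w[j + 1], w.drop (j + 2), e, by omega, ?_⟩
    have := det_mid p (w.take j) w[j] w[j+1] (w.drop (j + 2))
    rw [← e, ← hl] at this
    rw [← this]
    exact h2
  · rintro ⟨u, a, b, v, rfl, rfl, h⟩
    refine ⟨by omega, ?_, ?_⟩
    · rw [length_pathFrom]; simp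
    · rw [det_mid]; exact h

theorem cut_pathFrom (p : Pt) (u : List Pt) (a b : Pt) (v : List Pt) :
    cut (pathFrom p (u ++ a :: b :: v)) (u.length + 1) = pathFrom p (u ++ (a + b) :: v) := by
  induction u generalizing p with
  | nil => simp [cut, pathFrom, add_assoc]
  | cons c u ih => simpa [cut, pathFrom] using ih (p + c)

theorem set_pathFrom (p : Pt) (u : List Pt) (a b : Pt) (v : List Pt) :
    (pathFrom p (u ++ a :: b :: v)).set (u.length + 1) (p + u.sum + b)
      = pathFrom p (u ++ b :: a :: v) := by
  induction u generalizing p with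
  | nil => simp [pathFrom, add_assoc, add_comm a b]
  | cons c u ih =>
    have := ih (p + c)
    simp only [List.cons_append, pathFrom, List.length_cons, List.set_cons_succ, List.sum_cons]
    rw [← this, add_assoc p c]

theorem push_pathFrom (p : Pt) (u : List Pt) (a b : Pt) (v : List Pt) :
    push (pathFrom p (u ++ a :: b :: v)) (u.length + 1) = pathFrom p (u ++ b :: a :: v) := by
  rw [push, pt_mid2, pt_mid1, Nat.add_sub_cancel, pt_mid, ← set_pathFrom p u a b v]
  congr 1
  abel

theorem triArea2_pathFrom (p : Pt) (u : List Pt) (a b : Pt) (v : List Pt) :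
    triArea2 (pathFrom p (u ++ a :: b :: v)) (u.length + 1) = (det a b).natAbs := by
  rw [triArea2, det_mid]

theorem pathFrom_injective (p : Pt) (w w' : List Pt) (h : pathFrom p w = pathFrom p w') :
    w = w' := by
  induction w generalizing p w' with
  | nil =>
    cases w' with
    | nil => rfl
    | cons b w' => cases w' <;> simp [pathFrom] at h
  | cons a w ih =>
    cases w' with
    | nil => cases w <;> simp [pathFrom] at h
    | cons b w' =>
      simp only [pathFrom, List.cons.injEq, true_and] at h
      have hab : a = b := by
        have : (pathFrom (p + a) w).head? = (pathFrom (p + b) w').head? := by rw [h]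
        cases w <;> cases w' <;> simpa [pathFrom] using this
      subst hab
      rw [ih _ _ h]

theorem mem_pathFrom_iff (p z : Pt) (w : List Pt) :
    z ∈ pathFrom p w ↔ ∃ u v, w = u ++ v ∧ z = p + u.sum := by
  induction w generalizing p with
  | nil => simp [pathFrom]
  | cons a w ih =>
    simp only [pathFrom, List.mem_cons, ih]
    constructor
    · rintro (rfl | ⟨u, v, rfl, rfl⟩)
      · exact ⟨[], a :: w, by simp⟩
      · exact ⟨a :: u, v, by simp [add_assoc]⟩
    · rintro ⟨u, v, h, rfl⟩
      cases u with
      | nil => left; simp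
      | cons b u =>
        simp only [List.cons_append, List.cons.injEq] at h
        obtain ⟨rfl, rfl⟩ := h
        exact Or.inr ⟨u, v, rfl, by simp [add_assoc]⟩

/-! ## The recursion is deterministic -/

theorem FirstTurn.unique {s : ℤ → Prop} {γ : List Pt} {k l : ℕ} (h : FirstTurn s γ k)
    (h' : FirstTurn s γ l) : k = l :=
  le_antisymm (h.2 _ h'.1) (h'.2 _ h.1)

theorem MultRel.unique {Δ : Set Pt} {Init : List Pt → Prop} {s : ℤ → Prop} {γ : List Pt}
    {m m' : ℕ} (h : MultRel Δ Init s γ m) (h' : MultRel Δ Init s γ m') : m = m' := by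
  induction h generalizing m' with
  | init hi => cases h' <;> first | rfl | contradiction
  | noTurn hi ht =>
    cases h' with
    | init h => contradiction
    | noTurn => rfl
    | stepIn _ h => exact absurd h.1 (ht _)
    | stepOut _ h => exact absurd h.1 (ht _)
  | stepIn hi hf hin hc hp ihc ihp =>
    cases h' with
    | init h => contradiction
    | noTurn _ h => exact absurd hf.1 (h _)
    | stepIn _ h _ h1 h2 =>
      obtain rfl := hf.unique h
      rw [ihc h1, ihp h2]
    | stepOut _ h h1 =>
      obtain rfl := hf.unique h
      contradiction
  | stepOut hi hf hin hc ihc =>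
    cases h' with
    | init h => contradiction
    | noTurn _ h => exact absurd hf.1 (h _)
    | stepIn _ h h1 =>
      obtain rfl := hf.unique h
      contradiction
    | stepOut _ h _ h1 =>
      obtain rfl := hf.unique h
      rw [ihc h1]

theorem MultRel.multOf_eq {Δ : Set Pt} {Init : List Pt → Prop} {s : ℤ → Prop} {γ : List Pt}
    {m : ℕ} (h : MultRel Δ Init s γ m) : multOf Δ Init s γ = m := by
  have hex : ∃ m, MultRel Δ Init s γ m := ⟨m, h⟩
  rw [multOf, dif_pos hex]
  exact hex.choose_spec.unique h

/-! ## The measure for termination -/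

/-- The number of pairs of steps forming a left turn. -/
def inv : List Pt → ℕ
  | [] => 0
  | a :: l => l.countP (fun b => decide (0 < det a b)) + inv l

theorem inv_swap (u : List Pt) (a b : Pt) (v : List Pt) (h : 0 < det a b) :
    inv (u ++ b :: a :: v) < inv (u ++ a :: b :: v) := by
  induction u with
  | nil =>
    have h' : ¬ 0 < det b a := by
      unfold det at *
      linarith
    simp only [List.nil_append, inv, List.countP_cons]
    simp [h, h']
    omega
  | cons c u ih =>
    simp only [List.cons_append, inv]
    have : (u ++ b :: a :: v).Perm (u ++ a :: b :: v) :=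
      List.Perm.append_left u (List.Perm.swap a b v)
    rw [this.countP_eq]
    omega

/-! ## The rectangle -/

/-- The multiplicity relation for the rectangle in question, in terms of steps. -/
def Mu (c d : ℕ) (w : List Pt) (m : ℕ) : Prop :=
  MultRel (rect c d) (InitPlusRect d (Multiset.replicate c 1) {d}) (fun x => 0 < x)
    (pathFrom (0, (d : ℤ)) w) m

/-- Down steps of the given sizes. -/
def dn (L : List ℕ) : List Pt := L.map fun k : ℕ => ((0 : ℤ), -(k : ℤ))

theorem dSteps_eq (L : List ℕ) : dSteps L = dn L := by
  induction L with
  | nil => rfl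
  | cons a L ih => simpa [dSteps, dn] using ih

theorem hSteps_eq (L : List ℕ) : hSteps L = L.map fun k : ℕ => ((k : ℤ), (0 : ℤ)) := by
  induction L with
  | nil => rfl
  | cons a L ih => simpa [hSteps] using ih

theorem init_iff (c d : ℕ) (w : List Pt) :
    InitPlusRect d (Multiset.replicate c 1) {d} (pathFrom (0, (d : ℤ)) w) ↔
      w = List.replicate c ((1 : ℤ), (0 : ℤ)) ++ [((0 : ℤ), -(d : ℤ))] := by
  constructor
  · rintro ⟨s, t, hs, ht, h⟩
    rw [pathFrom_injective _ _ _ h]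
    rw [← Multiset.coe_replicate, Multiset.coe_eq_coe, List.perm_replicate] at hs
    rw [Multiset.coe_eq_singleton] at ht
    subst hs ht
    simp [hSteps_eq, dSteps_eq, dn]
  · rintro rfl
    exact ⟨List.replicate c 1, [d], Multiset.coe_replicate c 1, rfl, by simp [hSteps_eq, dSteps_eq, dn]⟩

theorem Mu.init {c d : ℕ} :
    Mu c d (List.replicate c ((1 : ℤ), (0 : ℤ)) ++ [((0 : ℤ), -(d : ℤ))]) 1 :=
  MultRel.init ((init_iff c d _).2 rfl)

/-- Weakly right-turning step lists. -/
def NoLeft (w : List Pt) : Prop := w.Pairwise fun a b => det a b ≤ 0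

theorem noLeft_std (k : ℕ) (L : List ℕ) :
    NoLeft (List.replicate k ((1 : ℤ), (0 : ℤ)) ++ dn L) := by
  unfold NoLeft dn
  rw [List.pairwise_append]
  refine ⟨?_, ?_, ?_⟩
  · rw [List.pairwise_replicate]; right; simp [det]
  · rw [List.pairwise_map]
    exact List.pairwise_of_forall (by simp [det])
  · intro a ha b hb
    rw [List.mem_replicate] at ha
    rw [List.mem_map] at hb
    obtain ⟨i, -, rfl⟩ := hb
    rw [ha.2]
    simp [det]

theorem not_init_of_turn {c d : ℕ} {u v : List Pt} {a b : Pt} (h : 0 < det a b) :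
    ¬ InitPlusRect d (Multiset.replicate c 1) {d} (pathFrom (0, (d : ℤ)) (u ++ a :: b :: v)) := by
  rw [init_iff]
  intro e
  have h1 := noLeft_std c [d]
  simp only [dn, List.map_cons, List.map_nil] at h1
  rw [← e, NoLeft, List.pairwise_append, List.pairwise_cons] at h1
  have := h1.2.1.1 b (by simp)
  omega

theorem firstTurn_of_noLeft {p : Pt} {u v : List Pt} {a b : Pt} (h : 0 < det a b)
    (hu : NoLeft (u ++ [a])) :
    FirstTurn (fun x => 0 < x) (pathFrom p (u ++ a :: b :: v)) (u.length + 1) := by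
  refine ⟨(turnAt_iff _ _ _ _).2 ⟨u, a, b, v, rfl, rfl, h⟩, ?_⟩
  intro j hj
  rw [turnAt_iff] at hj
  obtain ⟨u', a', b', v', e, rfl, h'⟩ := hj
  by_contra hlt
  push Not at hlt
  have e1 : (u' ++ [a', b']) <+: (u ++ [a]) := by
    refine List.prefix_of_prefix_length_le (l₃ := u ++ a :: b :: v) ?_ ?_ ?_
    · rw [e]; exact ⟨v', by simp⟩
    · exact ⟨b :: v, by simp⟩
    · simp; omega
  have := hu.sublist e1.sublist
  rw [List.pairwise_append] at this
  have := this.2.1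
  simp at this
  omega

theorem Mu.stepIn {c d : ℕ} {u v : List Pt} {a b : Pt} {m m' : ℕ} (h : 0 < det a b)
    (hf : FirstTurn (fun x => 0 < x) (pathFrom (0, (d : ℤ)) (u ++ a :: b :: v)) (u.length + 1))
    (hin : Inside (rect c d) (pathFrom (0, (d : ℤ)) (u ++ b :: a :: v)))
    (hc : Mu c d (u ++ (a + b) :: v) m) (hp : Mu c d (u ++ b :: a :: v) m') :
    Mu c d (u ++ a :: b :: v) ((det a b).natAbs * m + m') := by
  have := MultRel.stepIn (m' := m) (m'' := m') (not_init_of_turn (c := c) h) hf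
    (Δ := rect c d) (by rwa [push_pathFrom]) (by rwa [cut_pathFrom]) (by rwa [push_pathFrom])
  rwa [triArea2_pathFrom] at this

theorem Mu.stepOut {c d : ℕ} {u v : List Pt} {a b : Pt} {m : ℕ} (h : 0 < det a b)
    (hf : FirstTurn (fun x => 0 < x) (pathFrom (0, (d : ℤ)) (u ++ a :: b :: v)) (u.length + 1))
    (hin : ¬ Inside (rect c d) (pathFrom (0, (d : ℤ)) (u ++ b :: a :: v)))
    (hc : Mu c d (u ++ (a + b) :: v) m) :
    Mu c d (u ++ a :: b :: v) ((det a b).natAbs * m) := by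
  have := MultRel.stepOut (m' := m) (not_init_of_turn (c := c) h) hf
    (Δ := rect c d) (by rwa [push_pathFrom]) (by rwa [cut_pathFrom])
  rwa [triArea2_pathFrom] at this

/-- If the push contributes zero whenever it is inside. -/
theorem Mu.step_cut {c d : ℕ} {u v : List Pt} {a b : Pt} {m : ℕ} (h : 0 < det a b)
    (hf : FirstTurn (fun x => 0 < x) (pathFrom (0, (d : ℤ)) (u ++ a :: b :: v)) (u.length + 1))
    (hc : Mu c d (u ++ (a + b) :: v) m)
    (hp : Inside (rect c d) (pathFrom (0, (d : ℤ)) (u ++ b :: a :: v)) →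
      Mu c d (u ++ b :: a :: v) 0) :
    Mu c d (u ++ a :: b :: v) ((det a b).natAbs * m) := by
  by_cases hin : Inside (rect c d) (pathFrom (0, (d : ℤ)) (u ++ b :: a :: v))
  · simpa using Mu.stepIn h hf hin hc (hp hin)
  · exact Mu.stepOut h hf hin hc

/-- Steps allowed in increasing paths. -/
def Okay (v : Pt) : Prop := 0 < v.1 ∨ (v.1 = 0 ∧ v.2 ≤ 0)

/-- Steps that can never be repaired. -/
def Bad (v : Pt) : Prop := 2 ≤ v.1 ∨ (v.1 = 1 ∧ v.2 < 0)

theorem Okay.add {a b : Pt} (ha : Okay a) (hb : Okay b) : Okay (a + b) := by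
  unfold Okay at *
  simp only [Prod.fst_add, Prod.snd_add]
  omega

theorem Bad.add {a b : Pt} (ha : Bad a) (hb : Okay b) : Bad (a + b) := by
  unfold Okay Bad at *
  simp only [Prod.fst_add, Prod.snd_add]
  omega

theorem Bad.add' {a b : Pt} (ha : Okay a) (hb : Bad b) : Bad (a + b) := by
  rw [add_comm]; exact hb.add ha

theorem Mu.zero_of_bad (c d : ℕ) (w : List Pt) (hw : ∀ v ∈ w, Okay v) (hb : ∃ v ∈ w, Bad v) :
    Mu c d w 0 := by
  by_cases ht : ∃ k, TurnAt (fun x => 0 < x) (pathFrom (0, (d : ℤ)) w) k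
  · have hf : FirstTurn (fun x => 0 < x) (pathFrom (0, (d : ℤ)) w) (Nat.find ht) :=
      ⟨Nat.find_spec ht, fun j hj => Nat.find_min' ht hj⟩
    generalize Nat.find ht = k at hf
    obtain ⟨u, a, b, v, rfl, rfl, h⟩ := (turnAt_iff _ _ _ _).1 hf.1
    have hc := Mu.zero_of_bad c d (u ++ (a + b) :: v)
      (by
        intro z hz
        simp only [List.mem_append, List.mem_cons] at hz hw
        rcases hz with hz | rfl | hz
        · exact hw z (by simp [hz])
        · exact (hw a (by simp)).add (hw b (by simp))
        · exact hw z (by simp [hz]))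
      (by
        obtain ⟨z, hz, hbz⟩ := hb
        simp only [List.mem_append, List.mem_cons] at hz hw ⊢
        rcases hz with hz | rfl | rfl | hz
        · exact ⟨z, by simp [hz], hbz⟩
        · exact ⟨z + b, by simp, hbz.add (hw b (by simp))⟩
        · exact ⟨a + z, by simp, Bad.add' (hw a (by simp)) hbz⟩
        · exact ⟨z, by simp [hz], hbz⟩)
    have hperm : (u ++ b :: a :: v).Perm (u ++ a :: b :: v) :=
      List.Perm.append_left u (List.Perm.swap a b v)
    have hlt := inv_swap u a b v h
    have hp := Mu.zero_of_bad c d (u ++ b :: a :: v)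
      (fun z hz => hw z (hperm.mem_iff.1 hz))
      (by obtain ⟨z, hz, hbz⟩ := hb; exact ⟨z, hperm.mem_iff.2 hz, hbz⟩)
    simpa using Mu.step_cut h hf hc (fun _ => hp)
  · push Not at ht
    refine MultRel.noTurn ?_ ht
    rw [init_iff]
    rintro rfl
    obtain ⟨v, hv, hb⟩ := hb
    simp only [List.mem_append, List.mem_replicate, List.mem_singleton] at hv
    unfold Bad at hb
    rcases hv with ⟨-, rfl⟩ | rfl <;> simp at hb
termination_by (w.length, inv w)
decreasing_by
  · subst_vars
    apply Prod.Lex.left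
    simp
  · subst_vars
    have : (u ++ b :: a :: v).length = (u ++ a :: b :: v).length := by simp
    rw [this]
    exact Prod.Lex.right _ hlt

theorem inside_cut {Δ : Set Pt} {p : Pt} {u v : List Pt} {a b : Pt}
    (h : Inside Δ (pathFrom p (u ++ a :: b :: v))) :
    Inside Δ (pathFrom p (u ++ (a + b) :: v)) := by
  intro z hz
  rw [← cut_pathFrom] at hz
  exact h z (List.mem_of_mem_eraseIdx hz)

theorem inside_push {Δ : Set Pt} {p : Pt} {u v : List Pt} {a b : Pt}
    (h : Inside Δ (pathFrom p (u ++ a :: b :: v))) (hp : p + u.sum + b ∈ Δ) :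
    Inside Δ (pathFrom p (u ++ b :: a :: v)) := by
  intro z hz
  rw [← set_pathFrom] at hz
  rcases List.mem_or_eq_of_mem_set hz with hz | rfl
  · exact h z hz
  · exact hp

theorem inside_point {Δ : Set Pt} {p : Pt} {u v : List Pt}
    (h : Inside Δ (pathFrom p (u ++ v))) : p + u.sum ∈ Δ :=
  h _ ((mem_pathFrom_iff _ _ _).2 ⟨u, v, rfl, rfl⟩)

/-- The horizontal unit steps. -/
def rt (k : ℕ) : List Pt := List.replicate k ((1 : ℤ), (0 : ℤ))

theorem dn_append (L M : List ℕ) : dn (L ++ M) = dn L ++ dn M := List.map_append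

theorem sum_rt (k : ℕ) : (rt k).sum = ((k : ℤ), (0 : ℤ)) := by
  simp [rt]

theorem sum_dn (L : List ℕ) : (dn L).sum = ((0 : ℤ), -((L.sum : ℕ) : ℤ)) := by
  induction L with
  | nil => rfl
  | cons a L ih =>
    simp only [dn, List.map_cons, List.sum_cons] at ih ⊢
    rw [ih]
    ext <;> simp
    ring

theorem okay_dn (L : List ℕ) : ∀ v ∈ dn L, Okay v := by
  intro v hv
  simp only [dn, List.mem_map] at hv
  obtain ⟨k, -, rfl⟩ := hv
  right; simp

theorem okay_rt (k : ℕ) : ∀ v ∈ rt k, Okay v := by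
  intro v hv
  rw [rt, List.mem_replicate] at hv
  rw [hv.2]
  left; simp

theorem det_dr (a : ℕ) (b : ℤ) : det ((0 : ℤ), -(a : ℤ)) ((1 : ℤ), b) = a := by
  simp [det]

theorem firstTurn_std (p : Pt) (k : ℕ) (L : List ℕ) (a : ℕ) (ha : 0 < a) (b : ℤ) (t : List Pt) :
    FirstTurn (fun x => 0 < x) (pathFrom p ((rt k ++ dn L) ++
      ((0 : ℤ), -(a : ℤ)) :: ((1 : ℤ), b) :: t)) ((rt k ++ dn L).length + 1) := by
  apply firstTurn_of_noLeft
  · rw [det_dr]; exact_mod_cast ha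
  · have := noLeft_std k (L ++ [a])
    rw [dn_append] at this
    simpa [rt, dn] using this

theorem Mu.zero_of_not_sum (c d k : ℕ) (L : List ℕ) (hL : ∀ a ∈ L, 0 < a) (b : ℤ) (t : List Pt)
    (ht : ∀ v ∈ t, Okay v) (hb : ∀ S : List ℕ, S.Sublist L → ((S.sum : ℕ) : ℤ) ≠ b)
    (hin : Inside (rect c d) (pathFrom (0, (d : ℤ)) ((rt k ++ dn L) ++ ((1 : ℤ), b) :: t))) :
    Mu c d ((rt k ++ dn L) ++ ((1 : ℤ), b) :: t) 0 := by
  induction L using List.reverseRecOn generalizing b t with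
  | nil =>
    have h0 : b ≠ 0 := by simpa [eq_comm] using hb [] (by simp)
    have h1 : b ≤ 0 := by
      have e : (rt k ++ dn []) ++ ((1 : ℤ), b) :: t = (rt k ++ [((1 : ℤ), b)]) ++ t := by
        simp [dn]
      rw [e] at hin
      have := inside_point hin
      rw [List.sum_append, sum_rt] at this
      have := this.2.2.2
      simpa using this
    apply Mu.zero_of_bad
    · intro v hv
      simp only [List.mem_append, List.mem_cons] at hv
      rcases hv with (hv | hv) | rfl | hv
      · exact okay_rt _ _ hv
      · exact okay_dn _ _ hv
      · left; simp
      · exact ht _ hv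
    · exact ⟨(1, b), by simp, Or.inr ⟨rfl, lt_of_le_of_ne h1 h0⟩⟩
  | append_singleton L a ih =>
    have ha : 0 < a := hL a (by simp)
    have hL' : ∀ a ∈ L, 0 < a := fun i hi => hL i (by simp [hi])
    have e : (rt k ++ dn (L ++ [a])) ++ ((1 : ℤ), b) :: t
        = (rt k ++ dn L) ++ ((0 : ℤ), -(a : ℤ)) :: ((1 : ℤ), b) :: t := by
      rw [dn_append]; simp [dn]
    rw [e] at hin ⊢
    have hadd : ((0 : ℤ), -(a : ℤ)) + ((1 : ℤ), b) = ((1 : ℤ), b - a) := by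
      ext <;> simp; ring
    have hc : Mu c d ((rt k ++ dn L) ++ (((0 : ℤ), -(a : ℤ)) + ((1 : ℤ), b)) :: t) 0 := by
      have hin' := inside_cut hin
      rw [hadd] at hin' ⊢
      refine ih hL' _ _ ht ?_ hin'
      intro S hS hSb
      refine hb (S ++ [a]) (hS.append_right _) ?_
      simp [hSb]
    have := Mu.step_cut (c := c) (by rw [det_dr]; exact_mod_cast ha)
      (firstTurn_std _ k L a ha b t) hc
      (fun h => ih hL' b _ (by
        intro v hv
        rcases List.mem_cons.1 hv with rfl | hv
        · right; simp
        · exact ht v hv) (fun S hS => hb S (hS.trans (List.sublist_append_left _ _))) h)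
    simpa using this

theorem gen_sum {n : ℕ} {x : Fin n → ℕ} (hgen : Generic x) {S T : List (Fin n)} (hS : S.Nodup)
    (hT : T.Nodup) (h : (S.map x).sum = (T.map x).sum) (i : Fin n) : i ∈ S ↔ i ∈ T := by
  rw [← List.sum_toFinset x hS, ← List.sum_toFinset x hT] at h
  have : S.toFinset = T.toFinset := by
    by_contra hne
    exact hgen _ _ hne h
  rw [← List.mem_toFinset, this, List.mem_toFinset]

theorem filter_sum {n : ℕ} (x : Fin n → ℕ) (B : Finset (Fin n)) (L : List (Fin n)) :
    ((L.filter (fun i => decide (i ∈ B))).map x).sum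
      + ((L.filter (fun i => decide (¬ i ∈ B))).map x).sum = (L.map x).sum := by
  induction L with
  | nil => simp
  | cons a L ih =>
    by_cases h : a ∈ B
    · simp [h, ← ih]; ring
    · simp [h, ← ih]; ring

theorem Mu.inner {n : ℕ} {x : Fin n → ℕ} (hx : ∀ i, 0 < x i) (hgen : Generic x) (c d k : ℕ)
    (B : Finset (Fin n)) (L : List (Fin n)) (hL : L.Nodup) (t : List Pt)
    (ht : ∀ v ∈ t, Okay v) (m : ℕ)
    (hm : Mu c d (rt (k + 1) ++ dn ((L.filter (fun i => decide (¬ i ∈ B))).map x) ++ t) m)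
    (hin : Inside (rect c d) (pathFrom (0, (d : ℤ)) ((rt k ++ dn (L.map x)) ++
      ((1 : ℤ), ((((L.filter (fun i => decide (i ∈ B))).map x).sum : ℕ) : ℤ)) :: t))) :
    Mu c d ((rt k ++ dn (L.map x)) ++
      ((1 : ℤ), ((((L.filter (fun i => decide (i ∈ B))).map x).sum : ℕ) : ℤ)) :: t)
      (((L.filter (fun i => decide (i ∈ B))).map x).prod * m) := by
  induction L using List.reverseRecOn generalizing t with
  | nil =>
    have e : rt (k + 1) = rt k ++ [((1 : ℤ), (0 : ℤ))] := by
      simp [rt, List.replicate_succ']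
    rw [e] at hm
    simpa [dn] using hm
  | append_singleton L a ih =>
    obtain ⟨hL', -, hdis⟩ := List.nodup_append.1 hL
    have haL : a ∉ L := fun h => hdis a h a (by simp) rfl
    have hpos : ∀ b ∈ L.map x, 0 < b := by
      intro b hb
      obtain ⟨i, -, rfl⟩ := List.mem_map.1 hb
      exact hx i
    have e : ∀ b : ℤ, (rt k ++ dn ((L ++ [a]).map x)) ++ ((1 : ℤ), b) :: t
        = (rt k ++ dn (L.map x)) ++ ((0 : ℤ), -(x a : ℤ)) :: ((1 : ℤ), b) :: t := by
      intro b
      rw [List.map_append, dn_append]; simp [dn]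
    rw [e] at hin ⊢
    have hadd : ∀ b : ℤ, ((0 : ℤ), -(x a : ℤ)) + ((1 : ℤ), b) = ((1 : ℤ), b - x a) := by
      intro b; ext <;> simp; ring
    have hft := firstTurn_std (0, (d : ℤ)) k (L.map x) (x a) (hx a)
      ((((((L ++ [a]).filter (fun i => decide (i ∈ B))).map x).sum : ℕ)) : ℤ) t
    have hdet : ∀ b : ℤ, 0 < det ((0 : ℤ), -(x a : ℤ)) ((1 : ℤ), b) := by
      intro b; rw [det_dr]; exact_mod_cast hx a
    have hokay : ∀ v ∈ ((0 : ℤ), -(x a : ℤ)) :: t, Okay v := by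
      intro v hv
      rcases List.mem_cons.1 hv with rfl | hv
      · right; simp
      · exact ht v hv
    by_cases haB : a ∈ B
    · have e1 : (L ++ [a]).filter (fun i => decide (i ∈ B))
          = L.filter (fun i => decide (i ∈ B)) ++ [a] := by simp [haB]
      have e2 : (L ++ [a]).filter (fun i => decide (¬ i ∈ B))
          = L.filter (fun i => decide (¬ i ∈ B)) := by simp [haB]
      rw [e1] at hin hft ⊢
      rw [e2] at hm
      have hs : ((((L.filter (fun i => decide (i ∈ B)) ++ [a]).map x).sum : ℕ) : ℤ) - x a
          = ((((L.filter (fun i => decide (i ∈ B))).map x).sum : ℕ) : ℤ) := by simp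
      have hc := inside_cut hin
      rw [hadd, hs] at hc
      have hc := ih hL' t ht hm hc
      rw [← hs, ← hadd] at hc
      have := Mu.step_cut (c := c) (hdet _) hft hc
        (fun h => Mu.zero_of_not_sum c d k _ hpos _ _ hokay (by
          intro S hS hSb
          obtain ⟨S', hS', rfl⟩ := List.sublist_map_iff.1 hS
          have hnd : (L.filter (fun i => decide (i ∈ B)) ++ [a]).Nodup := by
            rw [← e1]; exact hL.filter _
          have := gen_sum hgen (hL'.sublist hS') hnd (by exact_mod_cast hSb) a
          exact haL (hS'.subset (this.2 (by simp)))) h)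
      rw [det_dr, Int.natAbs_natCast] at this
      convert this using 1
      simp
      ring
    · have e1 : (L ++ [a]).filter (fun i => decide (i ∈ B))
          = L.filter (fun i => decide (i ∈ B)) := by simp [haB]
      have e2 : (L ++ [a]).filter (fun i => decide (¬ i ∈ B))
          = L.filter (fun i => decide (¬ i ∈ B)) ++ [a] := by simp [haB]
      rw [e1] at hin hft ⊢
      rw [e2] at hm
      have hc := inside_cut hin
      rw [hadd] at hc
      have hc0 := Mu.zero_of_not_sum c d k _ hpos _ _ ht (by
          intro S hS hSb
          obtain ⟨S', hS', rfl⟩ := List.sublist_map_iff.1 hS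
          have hnd : (S' ++ [a]).Nodup := hL.sublist (hS'.append_right _)
          have := gen_sum hgen hnd (hL'.filter (fun i => decide (i ∈ B))) (by
            simp only [List.map_append, List.sum_append, List.map_singleton, List.sum_singleton]
            omega) a
          have := this.1 (by simp)
          exact haL (List.mem_of_mem_filter this)) hc
      rw [← hadd] at hc0
      have hp : Inside (rect c d) (pathFrom (0, (d : ℤ)) ((rt k ++ dn (L.map x)) ++
          ((1 : ℤ), ((((L.filter (fun i => decide (i ∈ B))).map x).sum : ℕ) : ℤ)) ::
          ((0 : ℤ), -(x a : ℤ)) :: t)) := by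
        refine inside_push hin ?_
        have h1 := inside_point hin
        have h2 : (0, (d : ℤ)) + ((rt k ++ dn (L.map x)) ++ [((0 : ℤ), -(x a : ℤ)),
            ((1 : ℤ), ((((L.filter (fun i => decide (i ∈ B))).map x).sum : ℕ) : ℤ))]).sum
            ∈ rect c d := by
          apply inside_point (v := t)
          simpa using hin
        simp only [List.sum_append, sum_rt, sum_dn, rect, Set.mem_ofPred_eq, Prod.fst_add,
          Prod.snd_add, List.sum_cons, List.sum_nil, Prod.fst_zero, Prod.snd_zero] at h1 h2 ⊢
        have h3 := filter_sum x B L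
        refine ⟨?_, ?_, ?_, ?_⟩ <;> omega
      have hpm := ih hL' _ hokay (by
        rw [List.map_append, dn_append] at hm
        simpa [dn] using hm) hp
      have := Mu.stepIn (c := c) (hdet _) hft hp hc0 hpm
      simpa using this

/-! ## Columns -/

/-- The steps of the columns. -/
def colsW {n : ℕ} (x : Fin n → ℕ) (d : ℕ) : List (List (Fin n) × Finset (Fin n)) → List Pt
  | [] => [((0 : ℤ), -(d : ℤ))]
  | q :: cs => dn (q.1.map x) ++ ((1 : ℤ), ((∑ i ∈ q.2, x i : ℕ) : ℤ)) :: colsW x d cs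

/-- Well-formed column data, with `M` the list of pending indices. -/
def WF {n : ℕ} : List (Fin n) → List (List (Fin n) × Finset (Fin n)) → Prop
  | M, [] => M = []
  | M, q :: cs => (M ++ q.1).Nodup ∧ (∀ i ∈ q.2, i ∈ M ++ q.1) ∧
      WF ((M ++ q.1).filter (fun i => decide (¬ i ∈ q.2))) cs

theorem okay_colsW {n : ℕ} (x : Fin n → ℕ) (d : ℕ) (cs : List (List (Fin n) × Finset (Fin n))) :
    ∀ v ∈ colsW x d cs, Okay v := by
  induction cs with
  | nil =>
    intro v hv
    simp only [colsW, List.mem_singleton] at hv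
    subst hv
    right; simp
  | cons q cs ih =>
    intro v hv
    simp only [colsW, List.mem_append, List.mem_cons] at hv
    rcases hv with hv | rfl | hv
    · exact okay_dn _ _ hv
    · left; simp
    · exact ih v hv

theorem filter_mem_sum {n : ℕ} (x : Fin n → ℕ) (B : Finset (Fin n)) (L : List (Fin n))
    (hL : L.Nodup) (hB : ∀ i ∈ B, i ∈ L) :
    ((L.filter (fun i => decide (i ∈ B))).map x).sum = ∑ i ∈ B, x i := by
  rw [← List.sum_toFinset x (hL.filter _)]
  congr 1
  ext i
  simp only [List.toFinset_filter, Finset.mem_filter, List.mem_toFinset, decide_eq_true_eq]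
  exact ⟨fun h => h.2, fun h => ⟨hB i h, h⟩⟩

theorem filter_mem_prod {n : ℕ} (x : Fin n → ℕ) (B : Finset (Fin n)) (L : List (Fin n))
    (hL : L.Nodup) (hB : ∀ i ∈ B, i ∈ L) :
    ((L.filter (fun i => decide (i ∈ B))).map x).prod = ∏ i ∈ B, x i := by
  rw [← List.prod_toFinset x (hL.filter _)]
  congr 1
  ext i
  simp only [List.toFinset_filter, Finset.mem_filter, List.mem_toFinset, decide_eq_true_eq]
  exact ⟨fun h => h.2, fun h => ⟨hB i h, h⟩⟩

theorem nodup_sum_le {n : ℕ} (x : Fin n → ℕ) (L : List (Fin n)) (hL : L.Nodup) :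
    (L.map x).sum ≤ ∑ i, x i := by
  rw [← List.sum_toFinset x hL]
  exact Finset.sum_le_sum_of_subset (Finset.subset_univ _)

theorem WF.nodup {n : ℕ} {M : List (Fin n)} {cs : List (List (Fin n) × Finset (Fin n))}
    (h : WF M cs) : M.Nodup := by
  cases cs with
  | nil => rw [WF] at h; simp [h]
  | cons q cs => exact (List.nodup_append.1 h.1).1

theorem inside_append {Δ : Set Pt} {p : Pt} {u v : List Pt} (h1 : Inside Δ (pathFrom p u))
    (h2 : Inside Δ (pathFrom (p + u.sum) v)) : Inside Δ (pathFrom p (u ++ v)) := by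
  induction u generalizing p with
  | nil => simpa using h2
  | cons a u ih =>
    intro z hz
    simp only [List.cons_append, pathFrom, List.mem_cons] at hz
    rcases hz with rfl | hz
    · exact h1 z (by simp [pathFrom])
    · refine ih (p := p + a) (fun y hy => h1 y (by simp [pathFrom, hy])) ?_ z hz
      simpa [add_assoc] using h2

theorem inside_dn {c d : ℕ} {k h : ℤ} {L : List ℕ} (hk : 0 ≤ k) (hk' : k ≤ c) (hh : h ≤ d)
    (hL : ((L.sum : ℕ) : ℤ) ≤ h) : Inside (rect c d) (pathFrom (k, h) (dn L)) := by
  induction L generalizing h with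
  | nil =>
    intro z hz
    simp only [dn, List.map_nil, pathFrom, List.mem_singleton] at hz
    subst hz
    simp at hL
    exact ⟨hk, hk', hL, hh⟩
  | cons a L ih =>
    intro z hz
    simp only [dn, List.map_cons, pathFrom, List.mem_cons] at hz
    simp only [List.sum_cons, Nat.cast_add] at hL
    rcases hz with rfl | hz
    · exact ⟨hk, hk', by simp; omega, hh⟩
    · refine ih (h := h - a) (by omega) (by omega) z ?_
      simpa [sub_eq_add_neg, dn] using hz

theorem inside_rt {c d : ℕ} {k : ℤ} (j : ℕ) (hk : 0 ≤ k) (hk' : k + j ≤ c) :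
    Inside (rect c d) (pathFrom (k, (d : ℤ)) (rt j)) := by
  induction j generalizing k with
  | zero =>
    intro z hz
    simp only [rt, List.replicate_zero, pathFrom, List.mem_singleton] at hz
    subst hz
    exact ⟨hk, by simpa using hk', by simp, le_refl _⟩
  | succ j ih =>
    intro z hz
    simp only [rt, List.replicate_succ, pathFrom, List.mem_cons] at hz
    push_cast at hk'
    rcases hz with rfl | hz
    · exact ⟨hk, by simp; omega, by simp, le_refl _⟩
    · refine ih (k := k + 1) (by omega) (by omega) z ?_
      simpa [rt] using hz

theorem inside_colsW {n : ℕ} (x : Fin n → ℕ) (c d : ℕ) (hd : d = ∑ i, x i) (k : ℕ)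
    (M : List (Fin n)) (cs : List (List (Fin n) × Finset (Fin n))) (hW : WF M cs)
    (hk : k + cs.length = c) :
    Inside (rect c d) (pathFrom ((k : ℤ), (d : ℤ) - (((M.map x).sum : ℕ) : ℤ)) (colsW x d cs)) := by
  induction cs generalizing k M with
  | nil =>
    rw [WF] at hW
    subst hW
    have := inside_dn (c := c) (d := d) (k := k) (h := d) (L := [d]) (by omega)
      (by simp at hk; omega) le_rfl (by simp)
    simpa [colsW, dn] using this
  | cons q cs ih =>
    obtain ⟨h1, h2, h3⟩ := hW
    simp only [List.length_cons] at hk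
    have hle := nodup_sum_le x _ h1
    rw [List.map_append, List.sum_append, ← hd] at hle
    have h4 := ih (k + 1) _ h3 (by omega)
    rw [colsW]
    refine inside_append (inside_dn (by omega) (by omega) (by omega) (by omega)) ?_
    have h5 := filter_sum x q.2 (M ++ q.1)
    rw [filter_mem_sum x _ _ h1 h2, List.map_append, List.sum_append] at h5
    intro z hz
    rw [pathFrom, List.mem_cons] at hz
    rcases hz with rfl | hz
    · simp only [sum_dn, rect, Set.mem_ofPred_eq, Prod.fst_add, Prod.snd_add]
      omega
    · apply h4 z
      convert hz using 2
      rw [sum_dn]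
      ext
      · simp
      · simp only [Prod.snd_add]
        omega

theorem inside_state {n : ℕ} (x : Fin n → ℕ) (c d : ℕ)
    (hd : d = ∑ i, x i) (k : ℕ) (M : List (Fin n)) (cs : List (List (Fin n) × Finset (Fin n)))
    (hW : WF M cs) (hk : k + cs.length = c) :
    Inside (rect c d) (pathFrom (0, (d : ℤ)) (rt k ++ dn (M.map x) ++ colsW x d cs)) := by
  have h0 := nodup_sum_le x _ hW.nodup
  rw [List.append_assoc]
  refine inside_append (inside_rt k le_rfl (by omega)) ?_
  have e1 : ((0 : ℤ), (d : ℤ)) + (rt k).sum = ((k : ℤ), (d : ℤ)) := by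
    rw [sum_rt]; simp
  rw [e1]
  refine inside_append (inside_dn (by omega) (by omega) le_rfl (by omega)) ?_
  have e2 : ((k : ℤ), (d : ℤ)) + (dn (M.map x)).sum
      = ((k : ℤ), (d : ℤ) - (((M.map x).sum : ℕ) : ℤ)) := by
    rw [sum_dn]; ext <;> simp; ring
  rw [e2]
  exact inside_colsW x c d hd k M cs hW hk

theorem Mu.cols {n : ℕ} {x : Fin n → ℕ} (hx : ∀ i, 0 < x i) (hgen : Generic x) (c d : ℕ)
    (hd : d = ∑ i, x i) (k : ℕ) (M : List (Fin n)) (cs : List (List (Fin n) × Finset (Fin n)))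
    (hW : WF M cs) (hk : k + cs.length = c) :
    Mu c d (rt k ++ dn (M.map x) ++ colsW x d cs) (cs.map fun q => ∏ i ∈ q.2, x i).prod := by
  induction cs generalizing k M with
  | nil =>
    rw [WF] at hW
    subst hW
    simp only [List.length_nil, add_zero] at hk
    subst hk
    simpa [colsW, dn, rt] using Mu.init
  | cons q cs ih =>
    have hins := inside_state x c d hd k M _ hW hk
    obtain ⟨h1, h2, h3⟩ := hW
    simp only [List.length_cons] at hk
    have hm := ih (k + 1) _ h3 (by omega)
    have e : rt k ++ dn (M.map x) ++ colsW x d (q :: cs) = (rt k ++ dn ((M ++ q.1).map x)) ++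
      ((1 : ℤ), (((((M ++ q.1).filter (fun i => decide (i ∈ q.2))).map x).sum : ℕ) : ℤ)) ::
        colsW x d cs := by
      rw [filter_mem_sum x _ _ h1 h2, colsW, List.map_append, dn_append]
      simp only [List.append_assoc]
    rw [e] at hins ⊢
    have := Mu.inner hx hgen c d k q.2 (M ++ q.1) h1 (colsW x d cs) (okay_colsW x d cs) _ hm hins
    rw [filter_mem_prod x _ _ h1 h2] at this
    simpa using this

theorem colsW_eq {n : ℕ} (x : Fin n → ℕ) (d : ℕ) (cs : List (List (Fin n) × Finset (Fin n))) :
    colsW x d cs = (cs.map fun q => dn (q.1.map x) ++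
      [((1 : ℤ), ((∑ i ∈ q.2, x i : ℕ) : ℤ))]).flatten ++ [((0 : ℤ), -(d : ℤ))] := by
  induction cs with
  | nil => rfl
  | cons q cs ih => rw [colsW, ih]; simp

theorem WF.of {n : ℕ} (M : List (Fin n)) (cs : List (List (Fin n) × Finset (Fin n)))
    (hnd : (M ++ (cs.map Prod.fst).flatten).Nodup)
    (hdis : cs.Pairwise fun q r => Disjoint q.2 r.2)
    (hcov : ∀ i ∈ M ++ (cs.map Prod.fst).flatten, ∃ q ∈ cs, i ∈ q.2)
    (hsub : ∀ pre q post, cs = pre ++ q :: post →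
      ∀ i ∈ q.2, i ∈ M ++ ((pre.map Prod.fst).flatten ++ q.1)) : WF M cs := by
  induction cs generalizing M with
  | nil =>
    rw [WF, List.eq_nil_iff_forall_not_mem]
    intro i hi
    simpa using hcov i (by simp [hi])
  | cons q cs ih =>
    rw [List.pairwise_cons] at hdis
    simp only [List.map_cons, List.flatten_cons, ← List.append_assoc] at hnd hcov
    have h0 : ∀ i ∈ q.2, i ∈ M ++ q.1 := by
      simpa using hsub [] q cs rfl
    refine ⟨(List.nodup_append.1 hnd).1, h0, ih _ ?_ hdis.2 ?_ ?_⟩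
    · exact hnd.sublist (List.filter_sublist.append_right _)
    · intro i hi
      have hi' : i ∈ M ++ q.1 ++ (cs.map Prod.fst).flatten :=
        (List.filter_sublist.append_right _).subset hi
      have hiq : i ∉ q.2 := by
        intro hq
        rcases List.mem_append.1 hi with h | h
        · simp [hq] at h
        · exact (List.nodup_append.1 hnd).2.2 i (h0 i hq) i h rfl
      obtain ⟨r, hr, hir⟩ := hcov i hi'
      rcases List.mem_cons.1 hr with rfl | hr
      · exact absurd hir hiq
      · exact ⟨r, hr, hir⟩
    · rintro pre r post rfl i hi
      have h1 := hsub (q :: pre) r post rfl i hi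
      have hiq : i ∉ q.2 := fun h =>
        Finset.disjoint_left.1 (hdis.1 r (by simp)) h hi
      simp only [List.mem_append, List.mem_filter, List.map_cons, List.flatten_cons] at h1 ⊢
      simp only [hiq, not_false_eq_true, decide_true, and_true]
      tauto

/-- For every admissible pair `(A,B)`, the positive multiplicity of
`γ(A,B)` equals `x₁ ⋯ xₙ`. -/
theorem multPlus_gammaAB (c n : ℕ) (hc : 0 < c) (hn : 0 < n)
    (x : Fin n → ℕ) (hx : ∀ i, 0 < x i) (hgen : Generic x)
    (A : Fin c → List (Fin n)) (B : Fin c → Finset (Fin n)) (hAB : IsAdmissible A B) :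
    multPlusRect c (∑ i, x i) (Multiset.replicate c 1) {∑ i, x i} (gammaAB x A B)
      = ∏ i, x i := by
  obtain ⟨hA, hB, -, hsub⟩ := hAB
  have hmem : ∀ i, i ∈ (List.ofFn A).flatten := by
    intro i
    rw [← Multiset.mem_coe, hA]
    exact Finset.mem_univ i
  have hnd : (List.ofFn A).flatten.Nodup := by
    rw [← Multiset.coe_nodup, hA]
    exact Finset.univ.nodup
  have hdisj : ∀ j k : Fin c, j ≠ k → Disjoint (B j) (B k) := by
    intro j k hjk
    rw [Finset.disjoint_left]
    intro i hj hk
    exact hjk ((hB i).unique hj hk)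
  have hfst : (List.ofFn fun k => (A k, B k)).map Prod.fst = List.ofFn A := by
    rw [List.map_ofFn]; rfl
  have hW : WF [] (List.ofFn fun k => (A k, B k)) := by
    apply WF.of
    · rw [hfst]; simpa using hnd
    · rw [List.pairwise_ofFn]
      intro j k hjk
      exact hdisj j k hjk.ne
    · intro i _
      obtain ⟨k, hk, -⟩ := hB i
      exact ⟨(A k, B k), List.mem_ofFn.2 ⟨k, rfl⟩, hk⟩
    · intro pre q post e i hi
      have hlen : pre.length < c := by
        have := congrArg List.length e
        simp at this
        omega
      have hq : q = (A ⟨pre.length, hlen⟩, B ⟨pre.length, hlen⟩) := by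
        have h1 : (List.ofFn fun k => (A k, B k))[pre.length]? = some q := by
          rw [e]; simp
        rw [List.getElem?_ofFn, dif_pos hlen] at h1
        exact (Option.some.inj h1).symm
      rw [hq] at hi
      have := hsub _ hi
      simp only [Finset.mem_sdiff, Finset.mem_filter, Finset.mem_univ, true_and] at this
      obtain ⟨⟨j, hj, hij⟩, -⟩ := this
      rcases lt_or_eq_of_le hj with hlt | rfl
      · have hlt' : (j : ℕ) < pre.length := hlt
        have h1 : (List.ofFn fun k => (A k, B k))[(j : ℕ)]? = some pre[(j : ℕ)] := by
          rw [e, List.getElem?_append_left hlt', List.getElem?_eq_getElem hlt']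
        rw [List.getElem?_ofFn, dif_pos j.2] at h1
        have h2 := Option.some.inj h1
        rw [List.nil_append, List.mem_append]
        left
        rw [List.mem_flatten]
        refine ⟨A j, ?_, hij⟩
        rw [List.mem_map]
        exact ⟨pre[(j : ℕ)], List.getElem_mem _, by rw [← h2]⟩
      · rw [hq]
        simp [hij]
  have hmain := Mu.cols hx hgen c _ rfl 0 [] _ hW (by simp)
  have hpath : rt 0 ++ dn (([] : List (Fin n)).map x)
      ++ colsW x (∑ i, x i) (List.ofFn fun k => (A k, B k))
      = (List.ofFn (colSteps x A B)).flatten ++ [((0 : ℤ), -((∑ i, x i : ℕ) : ℤ))] := by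
    rw [colsW_eq, List.map_ofFn]
    simp only [rt, dn, List.replicate_zero, List.map_nil, List.nil_append]
    congr 3
    funext k
    simp [colSteps, Function.comp_def]
  rw [hpath] at hmain
  have hprod : ((List.ofFn fun k => (A k, B k)).map fun q => ∏ i ∈ q.2, x i).prod = ∏ i, x i := by
    rw [List.map_ofFn, List.prod_ofFn]
    simp only [Function.comp_apply]
    have h1 : ∀ k, ∏ i ∈ B k, x i = ∏ i, if i ∈ B k then x i else 1 := by
      intro k
      rw [← Finset.prod_filter]
      simp
    simp only [h1]
    rw [Finset.prod_comm]
    refine Finset.prod_congr rfl fun i _ => ?_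
    obtain ⟨k, hk, huniq⟩ := hB i
    rw [Finset.prod_eq_single k]
    · rw [if_pos hk]
    · intro j _ hjk
      rw [if_neg]
      intro h
      exact hjk (huniq j h)
    · simp
  rw [hprod] at hmain
  exact MultRel.multOf_eq hmain

end TropPaths
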